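/- Let α, κ : ℝ → ℝ be smooth 2π-periodic functions. Then ∫₀^{2π} κ ((1/2) α_sss + 2 κ α_s + κ_s α) ds = ∫₀^{2π} ((1/2) κ_ss + (3/2) κ²) α_s ds. (This expresses that along a motion of closed equicentroaffine curves with motion function α, the derivative of H₂ = ∫ (1/2) κ² ds equals ω₁(X₁, X) = ω₀(X₂, X), so the first KdV vector field X₁ is Hamiltonian for H₂ with respect to ω₁.) -/

import Mathlib

/-- The derivative of a periodic function is periodic. -/
theorem deriv_periodic {f : ℝ → ℝ} {c : ℝ} (hf : Function.Periodic f c) :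
    Function.Periodic (deriv f) c := fun s => by
  rw [← deriv_comp_add_const, hf.funext]

/-- The integral over a period of the derivative of a periodic function vanishes. -/
theorem integral_eq_zero_of_hasDerivAt_of_periodic {f f' : ℝ → ℝ} {c : ℝ}
    (hf : Function.Periodic f c) (hderiv : ∀ s, HasDerivAt f (f' s) s) (hf' : Continuous f') :
    ∫ s in (0 : ℝ)..c, f' s = 0 := by
  rw [intervalIntegral.integral_eq_sub_of_hasDerivAt (fun s _ => hderiv s)
    (hf'.intervalIntegrable _ _), hf.eq, sub_self]

/-- for smooth 2π-periodic `α, κ`,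
`∫₀^{2π} κ Ω α_s ds = ∫₀^{2π} ((1/2) κ_ss + (3/2) κ²) α_s ds`,
i.e. the first KdV vector field is Hamiltonian for `H₂` with respect to `ω₁`. -/
theorem X1_Hamiltonian_for_H2
    (α κ : ℝ → ℝ)
    (hα : ContDiff ℝ (⊤ : ℕ∞) α)
    (hκ : ContDiff ℝ (⊤ : ℕ∞) κ)
    (hαper : ∀ s, α (s + 2 * Real.pi) = α s)
    (hκper : ∀ s, κ (s + 2 * Real.pi) = κ s) :
    ∫ s in (0 : ℝ)..(2 * Real.pi),
        κ s * ((1 / 2) * deriv (deriv (deriv α)) s + 2 * κ s * deriv α s + deriv κ s * α s)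
      = ∫ s in (0 : ℝ)..(2 * Real.pi),
          ((1 / 2) * deriv (deriv κ) s + (3 / 2) * (κ s) ^ 2) * deriv α s := by
  have hα₁ : ContDiff ℝ (⊤ : ℕ∞) (deriv α) := (contDiff_infty_iff_deriv.1 hα).2
  have hα₂ : ContDiff ℝ (⊤ : ℕ∞) (deriv (deriv α)) := (contDiff_infty_iff_deriv.1 hα₁).2
  have hα₃ : ContDiff ℝ (⊤ : ℕ∞) (deriv (deriv (deriv α))) := (contDiff_infty_iff_deriv.1 hα₂).2
  have hκ₁ : ContDiff ℝ (⊤ : ℕ∞) (deriv κ) := (contDiff_infty_iff_deriv.1 hκ).2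
  have hκ₂ : ContDiff ℝ (⊤ : ℕ∞) (deriv (deriv κ)) := (contDiff_infty_iff_deriv.1 hκ₁).2
  have hasDeriv {f : ℝ → ℝ} (hf : ContDiff ℝ (⊤ : ℕ∞) f) (s : ℝ) : HasDerivAt f (deriv f s) s :=
    ((contDiff_infty_iff_deriv.1 hf).1 s).hasDerivAt
  have := hα.continuous
  have := hα₁.continuous
  have := hα₃.continuous
  have := hκ.continuous
  have := hκ₁.continuous
  have := hκ₂.continuous
  rw [← sub_eq_zero, ← intervalIntegral.integral_sub
    (Continuous.intervalIntegrable (by fun_prop) _ _)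
    (Continuous.intervalIntegrable (by fun_prop) _ _)]
  refine integral_eq_zero_of_hasDerivAt_of_periodic
    (f := fun s => (1 / 2) * (κ s * deriv (deriv α) s - deriv κ s * deriv α s + κ s ^ 2 * α s))
    (fun s => ?_) (fun s => ?_) (by fun_prop)
  · simp only [hαper s, hκper s, deriv_periodic hαper s, deriv_periodic hκper s,
      deriv_periodic (deriv_periodic hαper) s]
  · refine ((((hasDeriv hκ s).mul (hasDeriv hα₂ s)).sub
      ((hasDeriv hκ₁ s).mul (hasDeriv hα₁ s))).add
      (((hasDeriv hκ s).pow 2).mul (hasDeriv hα s))).const_mul (1 / 2) |>.congr_deriv ?_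
    simp only [Pi.pow_apply]
    ring
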